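/- Kearnes' Theorem on minimal clones with a Mal'tsev operation. Let C be a minimal clone on a set A that contains a Mal'tsev operation. Then there exist a prime p and an elementary abelian p-group structure (A;+) on A such that C is the clone generated by the ternary operation x₁ − x₂ + x₃ (the clone of an affine space over the field Z_p). -/

import Mathlib

universe u

/-- The type of finitary operations (of positive arity `n + 1`) on `A`. -/
abbrev Ops (A : Type u) : Type u := Σ n : ℕ, (Fin (n + 1) → A) → A

/-- A set of finitary operations on `A` is a clone if it contains all projection
operations and is closed under composition. -/
def IsClone {A : Type u} (C : Set (Ops A)) : Prop :=
  (∀ (n : ℕ) (i : Fin (n + 1)), (⟨n, fun x => x i⟩ : Ops A) ∈ C) ∧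
  ∀ (n m : ℕ) (f : (Fin (n + 1) → A) → A) (g : Fin (n + 1) → (Fin (m + 1) → A) → A),
    (⟨n, f⟩ : Ops A) ∈ C → (∀ i, (⟨m, g i⟩ : Ops A) ∈ C) →
    (⟨m, fun x => f fun i => g i x⟩ : Ops A) ∈ C

/-- The clone generated by a set `F` of operations: the least clone containing `F`. -/
def cloneGen {A : Type u} (F : Set (Ops A)) : Set (Ops A) :=
  ⋂₀ {C : Set (Ops A) | IsClone C ∧ F ⊆ C}

/-- The clone of all projection operations on `A`. -/
def projClone (A : Type u) : Set (Ops A) :=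
  {f : Ops A | ∃ i : Fin (f.1 + 1), f.2 = fun x => x i}

/-- A clone `M` is maximal if it is a proper subclone of the clone of all operations
and the clone of all operations is the only clone properly containing it. -/
def IsMaximalClone {A : Type u} (M : Set (Ops A)) : Prop :=
  IsClone M ∧ M ≠ Set.univ ∧
    ∀ D : Set (Ops A), IsClone D → M ⊆ D → D = M ∨ D = Set.univ

/-- A clone `C` is minimal if the clone of projections is its unique proper subclone. -/
def IsMinimalClone {A : Type u} (C : Set (Ops A)) : Prop :=
  IsClone C ∧ C ≠ projClone A ∧
    ∀ D : Set (Ops A), IsClone D → D ⊆ C → D = projClone A ∨ D = C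

/-- An `n`-ary operation `f` preserves a `k`-ary relation `ρ` if applying `f`
coordinatewise to tuples from `ρ` always yields a tuple in `ρ`. -/
def Preserves {A : Type u} {n k : ℕ} (f : (Fin n → A) → A) (ρ : Set (Fin k → A)) : Prop :=
  ∀ t : Fin n → Fin k → A, (∀ i, t i ∈ ρ) → (fun j => f fun i => t i j) ∈ ρ

/-- `Pol ρ` is the clone of all operations preserving the relation `ρ`. -/
def Pol {A : Type u} {k : ℕ} (ρ : Set (Fin k → A)) : Set (Ops A) :=
  {f : Ops A | Preserves f.2 ρ}

/-- A Mal'tsev operation: a ternary operation satisfying `p(x,x,y) = p(y,x,x) = y`. -/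
def IsMaltsev {A : Type u} (p : (Fin 3 → A) → A) : Prop :=
  ∀ x y : A, p ![x, x, y] = y ∧ p ![y, x, x] = y

/-!
Write `x`, `y` for the two projections in the free algebra of binary operations of `C`. The relation
`CommRel C` is a congruence of this algebra modulo which it is abelian, and it does not identify `x`
and `y`, as otherwise `C` would contain a majority operation, which generates a clone without
Mal'tsev operations. The operations that act as projections on a given nontrivial quotient of a
subpower of `A` form a clone; it omits the Mal'tsev operation `p`, so by minimality it meets `C` in
projections only. Hence `C` acts faithfully on every such quotient. Applied to the quotient by
`CommRel C`, this shows that `p` commutes with itself, so that `p` is `x - y + z` for some abelian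
group. Applied to the quotient of `ℤ • id ⊆ A ^ A` by `q • (ℤ • id)`, for a prime `q` dividing the
exponent of the group, it shows that the projection `x` and `x + q • (y - x)` coincide.
-/

section Clones

variable {A : Type u} {C D F : Set (Ops A)}

theorem vec3_eta (x : Fin 3 → A) : ![x 0, x 1, x 2] = x :=
  FinVec.etaExpand_eq x

theorem vec2_eta (x : Fin 2 → A) : ![x 0, x 1] = x :=
  FinVec.etaExpand_eq x

namespace IsClone

theorem projClone_subset (hC : IsClone C) : projClone A ⊆ C := by
  rintro ⟨n, f⟩ ⟨i, hf : f = fun x => x i⟩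
  exact hf ▸ hC.1 n i

theorem inter (hC : IsClone C) (hD : IsClone D) : IsClone (C ∩ D) :=
  ⟨fun n i => ⟨hC.1 n i, hD.1 n i⟩, fun n m f g hf hg =>
    ⟨hC.2 n m f g hf.1 fun i => (hg i).1, hD.2 n m f g hf.2 fun i => (hg i).2⟩⟩

theorem comp_perm_mem (hC : IsClone C) {n m : ℕ} {f : (Fin (n + 1) → A) → A}
    (hf : (⟨n, f⟩ : Ops A) ∈ C) (σ : Fin (n + 1) → Fin (m + 1)) :
    (⟨m, fun x => f fun i => x (σ i)⟩ : Ops A) ∈ C :=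
  hC.2 n m f (fun i x => x (σ i)) hf fun i => hC.1 m (σ i)

theorem comp₂_mem (hC : IsClone C) {f : (Fin 2 → A) → A} (hf : (⟨1, f⟩ : Ops A) ∈ C) {n : ℕ}
    {g h : (Fin (n + 1) → A) → A} (hg : (⟨n, g⟩ : Ops A) ∈ C) (hh : (⟨n, h⟩ : Ops A) ∈ C) :
    (⟨n, fun x => f ![g x, h x]⟩ : Ops A) ∈ C := by
  convert hC.2 1 n f ![g, h] hf (Fin.forall_fin_two.2 ⟨hg, hh⟩) using 4 with x
  exact vec2_eta fun i => ![g, h] i x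

theorem comp₃_mem (hC : IsClone C) {p : (Fin 3 → A) → A} (hp : (⟨2, p⟩ : Ops A) ∈ C) {n : ℕ}
    {f g h : (Fin (n + 1) → A) → A} (hf : (⟨n, f⟩ : Ops A) ∈ C) (hg : (⟨n, g⟩ : Ops A) ∈ C)
    (hh : (⟨n, h⟩ : Ops A) ∈ C) : (⟨n, fun x => p ![f x, g x, h x]⟩ : Ops A) ∈ C := by
  convert hC.2 2 n p ![f, g, h] hp (Fin.forall_fin_succ.2 ⟨hf, Fin.forall_fin_two.2 ⟨hg, hh⟩⟩)
    using 4 with x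
  exact vec3_eta fun i => ![f, g, h] i x

end IsClone

theorem isClone_cloneGen (F : Set (Ops A)) : IsClone (cloneGen F) :=
  ⟨fun n i _ hD => hD.1.1 n i, fun n m f g hf hg D hD =>
    hD.1.2 n m f g (hf D hD) fun i => hg i D hD⟩

theorem subset_cloneGen (F : Set (Ops A)) : F ⊆ cloneGen F :=
  fun _ hf _ hD => hD.2 hf

theorem cloneGen_subset (hC : IsClone C) (hF : F ⊆ C) : cloneGen F ⊆ C :=
  fun _ hf => hf C ⟨hC, hF⟩

theorem isClone_pol {k : ℕ} (ρ : Set (Fin k → A)) : IsClone (Pol ρ) :=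
  ⟨fun _ i _ ht => ht i, fun _ _ _ g hf hg t ht =>
    hf (fun i j => g i fun l => t l j) fun i => hg i t ht⟩

namespace IsMinimalClone

theorem nontrivial (hC : IsMinimalClone C) : Nontrivial A := by
  by_contra h
  have : Subsingleton A := not_nontrivial_iff_subsingleton.1 h
  exact hC.2.1 <| Set.Subset.antisymm (fun f _ => ⟨0, Subsingleton.elim _ _⟩)
    hC.1.projClone_subset

theorem subset_of_mem (hC : IsMinimalClone C) (hD : IsClone D) {f : Ops A} (hfC : f ∈ C)
    (hfD : f ∈ D) (hf : f ∉ projClone A) : C ⊆ D := by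
  rcases hC.2.2 (C ∩ D) (hC.1.inter hD) Set.inter_subset_left with h | h
  · exact absurd (h ▸ ⟨hfC, hfD⟩) hf
  · exact Set.inter_eq_left.1 h

theorem eq_cloneGen_singleton (hC : IsMinimalClone C) {f : Ops A} (hfC : f ∈ C)
    (hf : f ∉ projClone A) : C = cloneGen {f} :=
  (hC.subset_of_mem (isClone_cloneGen {f}) hfC (subset_cloneGen {f} rfl) hf).antisymm
    (cloneGen_subset hC.1 (Set.singleton_subset_iff.2 hfC))

end IsMinimalClone

end Clones

section Subpowers

variable {A : Type u} {X : Type*} {C : Set (Ops A)} {θ : (X → A) → (X → A) → Prop}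

/-- The operations on `A` whose pointwise extensions to `A ^ X` preserve the binary relation `θ`. -/
def powerPol (θ : (X → A) → (X → A) → Prop) : Set (Ops A) :=
  {f | ∀ u v : Fin (f.1 + 1) → X → A, (∀ i, θ (u i) (v i)) →
    θ (fun x => f.2 (u · x)) fun x => f.2 (v · x)}

theorem isClone_powerPol (θ : (X → A) → (X → A) → Prop) : IsClone (powerPol θ) :=
  ⟨fun _ i _ _ h => h i, fun _ _ _ _ hf hg u v h => hf _ _ fun i => hg i u v h⟩

theorem rel_comp₃_of_mem_powerPol {p : (Fin 3 → A) → A} (hp : (⟨2, p⟩ : Ops A) ∈ powerPol θ)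
    {u₀ u₁ u₂ v₀ v₁ v₂ : X → A} (h₀ : θ u₀ v₀) (h₁ : θ u₁ v₁) (h₂ : θ u₂ v₂) :
    θ (fun x => p ![u₀ x, u₁ x, u₂ x]) fun x => p ![v₀ x, v₁ x, v₂ x] := by
  convert hp ![u₀, u₁, u₂] ![v₀, v₁, v₂]
    (Fin.forall_fin_succ.2 ⟨h₀, Fin.forall_fin_two.2 ⟨h₁, h₂⟩⟩) using 3 with x x
  · exact vec3_eta fun i => ![u₀, u₁, u₂] i x
  · exact vec3_eta fun i => ![v₀, v₁, v₂] i x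

/-- The operations on `A` whose pointwise extensions to `A ^ X` are projections modulo `θ`. Letting
the arguments vary modulo `θ` as well makes this a clone for every relation `θ`. -/
def projModClone (θ : (X → A) → (X → A) → Prop) : Set (Ops A) :=
  {f | ∃ i, ∀ u v : Fin (f.1 + 1) → X → A, (∀ j, θ (u j) (v j)) →
    θ (fun x => f.2 (u · x)) (v i)}

theorem isClone_projModClone (θ : (X → A) → (X → A) → Prop) : IsClone (projModClone θ) := by
  refine ⟨fun n i => ⟨i, fun u v h => h i⟩, fun n m f g ⟨i, hi⟩ hg => ?_⟩
  choose j hj using hg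
  exact ⟨j i, fun u v h => hi (fun k x => g k (u · x)) (fun k => v (j k)) fun k => hj k u v h⟩

/-- The relation `θ` on `A ^ X` is a partial equivalence relation preserved by `C`. This encodes a
congruence of the subalgebra `{u | θ u u}` of the `X`-th power of the algebra `(A; C)`. -/
structure IsSubpowerCongruence (C : Set (Ops A)) (θ : (X → A) → (X → A) → Prop) : Prop where
  symm {u v : X → A} : θ u v → θ v u
  trans {u v w : X → A} : θ u v → θ v w → θ u w
  subset_powerPol : C ⊆ powerPol θ

end Subpowers

section Maltsev

variable {A : Type u} {X : Type*} {C : Set (Ops A)} {p : (Fin 3 → A) → A}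

namespace IsMaltsev

theorem apply_of_eq_left (hp : IsMaltsev p) {x : Fin 3 → A} (h : x 0 = x 1) : p x = x 2 := by
  have hx : ![x 0, x 0, x 2] = x := by rw [← vec3_eta x, h]; rfl
  exact hx ▸ (hp (x 0) (x 2)).1

theorem apply_of_eq_right (hp : IsMaltsev p) {x : Fin 3 → A} (h : x 1 = x 2) : p x = x 0 := by
  have hx : ![x 0, x 1, x 1] = x := by rw [← vec3_eta x, h]; rfl
  exact hx ▸ (hp (x 1) (x 0)).2

theorem notMem_projModClone (hp : IsMaltsev p) {θ : (X → A) → (X → A) → Prop} {u v : X → A}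
    (hu : θ u u) (hv : θ v v) (huv : ¬ θ u v) : (⟨2, p⟩ : Ops A) ∉ projModClone θ := by
  rintro ⟨i, hi : ∀ a b : Fin 3 → X → A, _⟩
  have hvvu : θ u (![v, v, u] i) := by
    have := hi ![v, v, u] ![v, v, u] (by simp [Fin.forall_fin_succ, hu, hv])
    rwa [funext fun x => hp.apply_of_eq_left rfl] at this
  have huvv : θ u (![u, v, v] i) := by
    have := hi ![u, v, v] ![u, v, v] (by simp [Fin.forall_fin_succ, hu, hv])
    rwa [funext fun x => hp.apply_of_eq_right rfl] at this
  match i with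
  | 0 | 1 => exact huv hvvu
  | 2 => exact huv huvv

theorem notMem_projClone [Nontrivial A] (hp : IsMaltsev p) : (⟨2, p⟩ : Ops A) ∉ projClone A := by
  obtain ⟨a, b, hab⟩ := exists_pair_ne A
  have hp' : (⟨2, p⟩ : Ops A) ∉ projModClone (X := Unit) Eq :=
    hp.notMem_projModClone rfl rfl fun h : (fun _ => a) = fun _ => b => hab (congrFun h ())
  exact fun h => hp' ((isClone_projModClone Eq).projClone_subset h)

end IsMaltsev

namespace IsMinimalClone

theorem idempotent (hC : IsMinimalClone C) (hp : IsMaltsev p) (hpC : (⟨2, p⟩ : Ops A) ∈ C)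
    {n : ℕ} {f : (Fin (n + 1) → A) → A} (hf : (⟨n, f⟩ : Ops A) ∈ C) (a : A) :
    f (fun _ => a) = a := by
  have := hC.nontrivial
  have hpa : (⟨2, p⟩ : Ops A) ∈ Pol {t : Fin 1 → A | t 0 = a} := fun t ht =>
    (hp.apply_of_eq_left ((ht 0).trans (ht 1).symm)).trans (ht 2)
  exact hC.subset_of_mem (isClone_pol _) hpC hpa hp.notMem_projClone hf (fun _ _ => a) fun _ => rfl

theorem mem_projClone_of_mem_projModClone (hC : IsMinimalClone C) (hp : IsMaltsev p)
    (hpC : (⟨2, p⟩ : Ops A) ∈ C) {θ : (X → A) → (X → A) → Prop} {u v : X → A} (hu : θ u u)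
    (hv : θ v v) (huv : ¬ θ u v) {f : Ops A} (hfC : f ∈ C) (hf : f ∈ projModClone θ) :
    f ∈ projClone A := by
  by_contra hf'
  exact hp.notMem_projModClone hu hv huv
    (hC.subset_of_mem (isClone_projModClone θ) hfC hf hf' hpC)

/-- Given `f` and `g` that agree modulo `θ`, the operation `p(f, g, x₀)` acts as the projection to
`x₀` modulo `θ`, hence by minimality it is this projection. -/
theorem eq_of_isSubpowerCongruence (hC : IsMinimalClone C) (hp : IsMaltsev p)
    (hpC : (⟨2, p⟩ : Ops A) ∈ C) {θ : (X → A) → (X → A) → Prop} (hθ : IsSubpowerCongruence C θ)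
    {u v : X → A} (hu : θ u u) (hv : θ v v) (huv : ¬ θ u v)
    {n : ℕ} {f g : (Fin (n + 1) → A) → A} (hf : (⟨n, f⟩ : Ops A) ∈ C) (hg : (⟨n, g⟩ : Ops A) ∈ C)
    (hfg : ∀ w : Fin (n + 1) → X → A, (∀ i, θ (w i) (w i)) →
      θ (fun x => f (w · x)) fun x => g (w · x)) : f = g := by
  let t : (Fin (n + 2) → A) → A := fun x => p ![f (Fin.tail x), g (Fin.tail x), x 0]
  have htC : (⟨n + 1, t⟩ : Ops A) ∈ C :=
    hC.1.comp₃_mem hpC (hC.1.comp_perm_mem hf Fin.succ) (hC.1.comp_perm_mem hg Fin.succ)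
      (hC.1.1 _ 0)
  have ht (a b : Fin (n + 2) → X → A) (hab : ∀ j, θ (a j) (b j)) :
      θ (fun x => t (a · x)) (b 0) := by
    have hb (i : Fin (n + 1)) : θ (b i.succ) (b i.succ) :=
      hθ.trans (hθ.symm (hab i.succ)) (hab i.succ)
    have hfab : θ (fun x => f fun i => a i.succ x) fun x => g fun i => b i.succ x :=
      hθ.trans (hθ.subset_powerPol hf _ _ fun i => hab i.succ) (hfg _ hb)
    have hgab : θ (fun x => g fun i => a i.succ x) fun x => g fun i => b i.succ x :=
      hθ.subset_powerPol hg _ _ fun i => hab i.succ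
    have h := rel_comp₃_of_mem_powerPol (hθ.subset_powerPol hpC) hfab hgab (hab 0)
    simp only [(hp _ _).1] at h
    exact h
  obtain ⟨j, hj : t = fun x => x j⟩ :=
    hC.mem_projClone_of_mem_projModClone hp hpC hu hv huv htC ⟨0, ht⟩
  obtain rfl | ⟨k, rfl⟩ := j.eq_zero_or_eq_succ
  · funext x
    have htx : t (Fin.cons (g x) x) = f x := hp.apply_of_eq_right rfl
    rw [← htx, hj]
    rfl
  · let w : Fin (n + 2) → X → A := Fin.cons v fun _ => u
    have hw (j : Fin (n + 2)) : θ (w j) (w j) := Fin.cases hv (fun _ => hu) j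
    have htw := ht w w hw
    rw [hj] at htw
    exact absurd htw huv

end IsMinimalClone

end Maltsev

section Majority

variable {A : Type u} {C : Set (Ops A)} {p m : (Fin 3 → A) → A}

/-- A majority operation: a ternary operation that takes the value of any two equal arguments. -/
def IsMajority (m : (Fin 3 → A) → A) : Prop :=
  ∀ x y : A, m ![x, x, y] = x ∧ m ![x, y, x] = x ∧ m ![y, x, x] = x

theorem IsMajority.apply_of_eq (hm : IsMajority m) {x : Fin 3 → A} {i j : Fin 3} (hij : i ≠ j)
    {a : A} (hi : x i = a) (hj : x j = a) : m x = a := by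
  rw [← vec3_eta x]
  fin_cases i <;> fin_cases j <;> simp_all [hm _ _]

theorem IsMajority.notMem_projClone [Nontrivial A] (hm : IsMajority m) :
    (⟨2, m⟩ : Ops A) ∉ projClone A := by
  rintro ⟨i, hi : m = fun x => x i⟩
  obtain ⟨a, b, hab⟩ := exists_pair_ne A
  have h₀ := (hm a b).1
  have h₁ := (hm a b).2.1
  have h₂ := (hm a b).2.2
  rw [hi] at h₀ h₁ h₂
  match i with
  | 0 => exact hab h₂.symm
  | 1 => exact hab h₁.symm
  | 2 => exact hab h₀.symm

theorem IsMajority.mem_pol_or (hm : IsMajority m) (a b : A) :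
    (⟨2, m⟩ : Ops A) ∈ Pol {t : Fin 2 → A | t 0 = a ∨ t 1 = b} := by
  classical
  intro t ht
  obtain ⟨i, j, hij, h⟩ := Fintype.exists_ne_map_eq_of_card_lt
    (fun i : Fin 3 => decide (t i 0 = a)) (by decide)
  by_cases hi : t i 0 = a
  · have hj : t j 0 = a := by simpa [hi] using h
    exact .inl (hm.apply_of_eq hij hi hj)
  · have hj : t j 0 ≠ a := by simpa [hi] using h
    exact .inr (hm.apply_of_eq hij ((ht i).resolve_left hi) ((ht j).resolve_left hj))

theorem IsMaltsev.notMem_pol_or (hp : IsMaltsev p) {a b : A} (hab : a ≠ b) :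
    (⟨2, p⟩ : Ops A) ∉ Pol {t : Fin 2 → A | t 0 = a ∨ t 1 = b} := by
  intro h
  have hba := h ![![a, a], ![a, b], ![b, b]] (by simp [Fin.forall_fin_succ])
  rcases hba with hb | ha
  · exact hab (hb.symm.trans (hp.apply_of_eq_left rfl))
  · exact hab ((hp.apply_of_eq_right rfl).symm.trans ha)

theorem IsMinimalClone.majority_notMem (hC : IsMinimalClone C) (hp : IsMaltsev p)
    (hpC : (⟨2, p⟩ : Ops A) ∈ C) (hm : IsMajority m) : (⟨2, m⟩ : Ops A) ∉ C := by
  have := hC.nontrivial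
  obtain ⟨a, b, hab⟩ := exists_pair_ne A
  exact fun hmC => hp.notMem_pol_or hab
    (hC.subset_of_mem (isClone_pol _) hmC (hm.mem_pol_or a b) hm.notMem_projClone hpC)

end Majority

section Commutator

variable {A : Type u} {C : Set (Ops A)} {p : (Fin 3 → A) → A}

/-- In the free algebra of ternary operations of `C`, intersect the congruences given by the
identifications of variables `x = y` and `y = z`; `CommRel C` is the image of this intersection
under the identification `x = z`, a relation on the free algebra of binary operations of `C`. It
contains the commutator of the full congruence of the latter with itself. -/
def CommRel (C : Set (Ops A)) (u v : (Fin 2 → A) → A) : Prop :=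
  ∃ r s : (Fin 3 → A) → A, (⟨2, r⟩ : Ops A) ∈ C ∧ (⟨2, s⟩ : Ops A) ∈ C ∧
    (∀ x z, r ![x, x, z] = s ![x, x, z]) ∧ (∀ x z, r ![x, z, z] = s ![x, z, z]) ∧
    (fun x => r ![x 0, x 1, x 0]) = u ∧ (fun x => s ![x 0, x 1, x 0]) = v

theorem CommRel.mem_left (hC : IsClone C) {u v : (Fin 2 → A) → A} (h : CommRel C u v) :
    (⟨1, u⟩ : Ops A) ∈ C := by
  obtain ⟨r, _, hr, -, -, -, rfl, -⟩ := h
  exact hC.comp₃_mem hr (hC.1 1 0) (hC.1 1 1) (hC.1 1 0)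

theorem CommRel.refl (hC : IsClone C) {u : (Fin 2 → A) → A} (hu : (⟨1, u⟩ : Ops A) ∈ C) :
    CommRel C u u := by
  have hr : (⟨2, fun x => u ![x 0, x 1]⟩ : Ops A) ∈ C := hC.comp₂_mem hu (hC.1 2 0) (hC.1 2 1)
  have hru : (fun x => u ![x 0, x 1]) = u := funext fun x => congrArg u (vec2_eta x)
  exact ⟨_, _, hr, hr, fun _ _ => rfl, fun _ _ => rfl, hru, hru⟩

theorem CommRel.isSubpowerCongruence (hC : IsClone C) (hp : IsMaltsev p)
    (hpC : (⟨2, p⟩ : Ops A) ∈ C) : IsSubpowerCongruence C (CommRel C) where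
  symm := fun ⟨r, s, hr, hs, h₀, h₁, hu, hv⟩ =>
    ⟨s, r, hs, hr, fun x z => (h₀ x z).symm, fun x z => (h₁ x z).symm, hv, hu⟩
  trans := by
    rintro u v w ⟨r, s, hr, hs, h₀, h₁, rfl, rfl⟩ ⟨r', s', hr', hs', h₀', h₁', hv, rfl⟩
    refine ⟨fun x => p ![r x, s x, r' x], s', hC.comp₃_mem hpC hr hs hr', hs', fun x z => ?_,
      fun x z => ?_, funext fun x => ?_, rfl⟩
    · simp only [h₀, (hp _ _).1, h₀']
    · simp only [h₁, (hp _ _).1, h₁']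
    · simp only [congrFun hv x, (hp _ _).2]
  subset_powerPol := by
    rintro ⟨n, f⟩ hf u v huv
    choose r s hr hs h₀ h₁ hu hv using huv
    exact ⟨fun x => f (r · x), fun x => f (s · x), hC.2 n 2 f r hf hr, hC.2 n 2 f s hf hs,
      fun x z => congrArg f (funext fun i => h₀ i x z),
      fun x z => congrArg f (funext fun i => h₁ i x z),
      funext fun x => congrArg f (funext fun i => congrFun (hu i) x),
      funext fun x => congrArg f (funext fun i => congrFun (hv i) x)⟩

theorem IsMinimalClone.not_commRel (hC : IsMinimalClone C) (hp : IsMaltsev p)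
    (hpC : (⟨2, p⟩ : Ops A) ∈ C) : ¬ CommRel C (fun x => x 0) fun x => x 1 := by
  rintro ⟨r, s, hr, hs, h₀, h₁, hr', hs'⟩
  have hm : IsMajority fun x => p ![r x, s x, x 1] := by
    intro x y
    have hrx : r ![x, y, x] = x := congrFun hr' ![x, y]
    have hsx : s ![x, y, x] = y := congrFun hs' ![x, y]
    refine ⟨?_, ?_, ?_⟩
    · exact hp.apply_of_eq_left (h₀ x y)
    · exact (congrArg₂ (fun a b => p ![a, b, y]) hrx hsx).trans (hp y x).2
    · exact hp.apply_of_eq_left (h₁ y x)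
  exact hC.majority_notMem hp hpC hm (hC.1.comp₃_mem hpC hr hs (hC.1.1 2 1))

/-- The operations `f` and `g` commute: `g` is a homomorphism with respect to `f`. -/
def OpsCommute {n m : ℕ} (f : (Fin n → A) → A) (g : (Fin m → A) → A) : Prop :=
  ∀ x : Fin n → Fin m → A, f (fun i => g (x i)) = g fun j => f (x · j)

theorem IsMinimalClone.exists_ternary_lift (hC : IsMinimalClone C) (hp : IsMaltsev p)
    (hpC : (⟨2, p⟩ : Ops A) ∈ C) {c : Fin 3 → (Fin 2 → A) → A}
    (hc : ∀ j, (⟨1, c j⟩ : Ops A) ∈ C) :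
    ∃ d : Fin 3 → (Fin 3 → A) → A, (∀ j, (⟨2, d j⟩ : Ops A) ∈ C) ∧
      (∀ x z, d 0 ![x, x, z] = d 1 ![x, x, z]) ∧ (∀ x z, d 1 ![x, z, z] = d 2 ![x, z, z]) ∧
      ∀ x j, d j ![x 0, x 1, x 0] = c j x := by
  have hid (j : Fin 3) (x : A) : c j ![x, x] = x :=
    (congrArg (c j) (vec2_eta fun _ => x)).trans (hC.idempotent hp hpC (hc j) x)
  have hmem (j : Fin 3) (k l : Fin 3) : (⟨2, fun x => c j ![x k, x l]⟩ : Ops A) ∈ C :=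
    hC.1.comp₂_mem (hc j) (hC.1.1 2 k) (hC.1.1 2 l)
  -- `c 2 (z, y)` is corrected by `c 1` so as to agree with `c 1 (x, y)` at `y = z`; at `x = z` the
  -- correction cancels.
  refine ⟨![fun x => c 0 ![x 0, x 1], fun x => c 1 ![x 0, x 1],
    fun x => p ![c 2 ![x 2, x 1], c 1 ![x 2, x 1], c 1 ![x 0, x 1]]], ?_, ?_, ?_, ?_⟩
  · refine Fin.forall_fin_succ.2 ⟨hmem 0 0 1, Fin.forall_fin_two.2 ⟨hmem 1 0 1, ?_⟩⟩
    exact hC.1.comp₃_mem hpC (hmem 2 2 1) (hmem 1 2 1) (hmem 1 0 1)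
  · intro x z
    exact (hid 0 x).trans (hid 1 x).symm
  · intro x z
    simp [hid, (hp _ _).1]
  · intro x j
    fin_cases j <;> simp [vec2_eta, (hp _ _).2]

/-- At the identifications `x = y` and `y = z` of the variables of the lifts the two sides become
`f` applied to the lifts of the third and of the first arguments of `p`, respectively. -/
theorem IsMinimalClone.commRel_comp_comm (hC : IsMinimalClone C) (hp : IsMaltsev p)
    (hpC : (⟨2, p⟩ : Ops A) ∈ C) {n : ℕ} {f : (Fin (n + 1) → A) → A} (hf : (⟨n, f⟩ : Ops A) ∈ C)
    {c : Fin (n + 1) → Fin 3 → (Fin 2 → A) → A} (hc : ∀ i j, (⟨1, c i j⟩ : Ops A) ∈ C) :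
    CommRel C (fun x => f fun i => p fun j => c i j x)
      (fun x => p fun j => f fun i => c i j x) := by
  choose d hd h₀ h₁ hdc using fun i => hC.exists_ternary_lift hp hpC (hc i)
  refine ⟨fun x => f fun i => p fun j => d i j x, fun x => p fun j => f fun i => d i j x,
    hC.1.2 n 2 f _ hf fun i => hC.1.2 2 2 p _ hpC (hd i),
    hC.1.2 2 2 p _ hpC fun j => hC.1.2 n 2 f _ hf (hd · j), fun x z => ?_, fun x z => ?_, ?_, ?_⟩
  · have h : f (fun i => d i 0 ![x, x, z]) = f fun i => d i 1 ![x, x, z] :=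
      congrArg f (funext fun i => h₀ i x z)
    exact (congrArg f (funext fun i => hp.apply_of_eq_left (h₀ i x z))).trans
      (hp.apply_of_eq_left (x := fun j => f fun i => d i j ![x, x, z]) h).symm
  · have h : f (fun i => d i 1 ![x, z, z]) = f fun i => d i 2 ![x, z, z] :=
      congrArg f (funext fun i => h₁ i x z)
    exact (congrArg f (funext fun i => hp.apply_of_eq_right (h₁ i x z))).trans
      (hp.apply_of_eq_right (x := fun j => f fun i => d i j ![x, z, z]) h).symm
  · simp only [hdc]
  · simp only [hdc]

theorem IsMinimalClone.opsCommute (hC : IsMinimalClone C) (hp : IsMaltsev p)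
    (hpC : (⟨2, p⟩ : Ops A) ∈ C) {n : ℕ} {f : (Fin (n + 1) → A) → A}
    (hf : (⟨n, f⟩ : Ops A) ∈ C) : OpsCommute f p := by
  let e : Fin (n + 1) × Fin 3 ≃ Fin (3 * n + 2 + 1) :=
    Fintype.equivFinOfCardEq (by simp; ring)
  have hmem (i : Fin (n + 1)) (j : Fin 3) :
      (⟨3 * n + 2, fun x => x (e (i, j))⟩ : Ops A) ∈ C := hC.1.1 _ _
  have hfp : (fun x : Fin (3 * n + 2 + 1) → A => f fun i => p fun j => x (e (i, j))) =
      fun x => p fun j => f fun i => x (e (i, j)) :=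
    hC.eq_of_isSubpowerCongruence hp hpC (CommRel.isSubpowerCongruence hC.1 hp hpC)
      (.refl hC.1 (hC.1.1 1 0)) (.refl hC.1 (hC.1.1 1 1)) (hC.not_commRel hp hpC)
      (hC.1.2 _ _ f _ hf fun i => hC.1.2 _ _ p _ hpC (hmem i))
      (hC.1.2 _ _ p _ hpC fun j => hC.1.2 _ _ f _ hf (hmem · j))
      fun w hw => hC.commRel_comp_comm hp hpC hf fun i j => (hw (e (i, j))).mem_left hC.1
  intro x
  simpa using congrFun hfp fun k => x (e.symm k).1 (e.symm k).2

end Commutator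

section Affine

variable {A : Type u} {p : (Fin 3 → A) → A}

theorem OpsCommute.apply₃ (h : OpsCommute p p) (a₁ a₂ a₃ b₁ b₂ b₃ c₁ c₂ c₃ : A) :
    p ![p ![a₁, a₂, a₃], p ![b₁, b₂, b₃], p ![c₁, c₂, c₃]] =
      p ![p ![a₁, b₁, c₁], p ![a₂, b₂, c₂], p ![a₃, b₃, c₃]] := by
  let x : Fin 3 → Fin 3 → A := ![![a₁, a₂, a₃], ![b₁, b₂, b₃], ![c₁, c₂, c₃]]
  calc p ![p ![a₁, a₂, a₃], p ![b₁, b₂, b₃], p ![c₁, c₂, c₃]] = p fun i => p (x i) :=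
        congrArg p (vec3_eta fun i => p (x i))
    _ = p fun j => p (x · j) := h x
    _ = p fun j => p ![x 0 j, x 1 j, x 2 j] :=
        congrArg p (funext fun j => congrArg p (vec3_eta (x · j)).symm)
    _ = _ := congrArg p (vec3_eta fun j => p ![x 0 j, x 1 j, x 2 j]).symm

/-- The group structure with zero element `o`, addition `p(a, o, b)` and negation `p(o, a, o)`. -/
abbrev IsMaltsev.addCommGroup (hp : IsMaltsev p) (h : OpsCommute p p) (o : A) : AddCommGroup A :=
  let _ : Zero A := ⟨o⟩
  let _ : Add A := ⟨fun a b => p ![a, o, b]⟩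
  let _ : Neg A := ⟨fun a => p ![o, a, o]⟩
  have assoc (a b c : A) : p ![p ![a, o, b], o, c] = p ![a, o, p ![b, o, c]] := by
    simpa only [(hp _ _).1, (hp _ _).2] using h.apply₃ a o b o o o o o c
  have comm (a b : A) : p ![a, o, b] = p ![b, o, a] := by
    simpa only [(hp _ _).1, (hp _ _).2] using h.apply₃ o o a o o o b o o
  have neg_add (a : A) : p ![p ![o, a, o], o, a] = o := by
    simpa only [(hp _ _).1, (hp _ _).2] using h.apply₃ o a o o o o o o a
  { AddGroup.ofLeftAxioms assoc (fun a => (hp o a).1) neg_add with add_comm := comm }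

theorem IsMaltsev.exists_addCommGroup [Nonempty A] (hp : IsMaltsev p) (h : OpsCommute p p) :
    ∃ _ : AddCommGroup A, p = fun x => x 0 - x 1 + x 2 := by
  obtain ⟨o⟩ := ‹Nonempty A›
  have h_sub (a b : A) : p ![a, o, p ![o, b, o]] = p ![a, b, o] := by
    simpa only [(hp _ _).1, (hp _ _).2] using h.apply₃ a o o o o o o b o
  have h_add (a b c : A) : p ![p ![a, b, o], o, c] = p ![a, b, c] := by
    simpa only [(hp _ _).1, (hp _ _).2] using h.apply₃ a b o o o o o o c
  refine ⟨hp.addCommGroup h o, funext fun x => ?_⟩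
  calc p x = p ![x 0, x 1, x 2] := congrArg p (vec3_eta x).symm
    _ = p ![p ![x 0, o, p ![o, x 1, o]], o, x 2] := by rw [h_sub, h_add]

end Affine

section PrimeExponent

variable {A : Type u} [AddCommGroup A]

theorem isMaltsev_sub_add : IsMaltsev fun x : Fin 3 → A => x 0 - x 1 + x 2 :=
  fun x y => by simp

theorem isSubpowerCongruence_sub_mem {X : Type*} (S H : AddSubgroup (X → A)) :
    IsSubpowerCongruence (cloneGen {(⟨2, fun x : Fin 3 → A => x 0 - x 1 + x 2⟩ : Ops A)})
      fun u v => u ∈ S ∧ v ∈ S ∧ u - v ∈ H where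
  symm := fun ⟨hu, hv, h⟩ => ⟨hv, hu, by simpa only [neg_sub] using H.neg_mem h⟩
  trans := fun ⟨hu, _, huv⟩ ⟨_, hw, hvw⟩ =>
    ⟨hu, hw, by simpa only [sub_add_sub_cancel] using H.add_mem huv hvw⟩
  subset_powerPol := by
    refine cloneGen_subset (isClone_powerPol _) (Set.singleton_subset_iff.2 fun u v h => ?_)
    have hS {w : Fin 3 → X → A} (hw : ∀ i, w i ∈ S) : w 0 - w 1 + w 2 ∈ S :=
      S.add_mem (S.sub_mem (hw 0) (hw 1)) (hw 2)
    have hH : u 0 - v 0 - (u 1 - v 1) + (u 2 - v 2) ∈ H :=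
      H.add_mem (H.sub_mem (h 0).2.2 (h 1).2.2) (h 2).2.2
    refine ⟨hS fun i => (h i).1, hS fun i => (h i).2.1, ?_⟩
    have h_eq : u 0 - v 0 - (u 1 - v 1) + (u 2 - v 2) =
        u 0 - u 1 + u 2 - (v 0 - v 1 + v 2) := by abel
    exact h_eq ▸ hH

theorem IsClone.add_nsmul_sub_mem {C : Set (Ops A)} (hC : IsClone C)
    (h : (⟨2, fun x : Fin 3 → A => x 0 - x 1 + x 2⟩ : Ops A) ∈ C) (k : ℕ) :
    (⟨1, fun x : Fin 2 → A => x 0 + k • (x 1 - x 0)⟩ : Ops A) ∈ C := by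
  induction k with
  | zero => simpa using hC.1 1 0
  | succ k ih =>
    convert hC.comp₃_mem h ih (hC.1 1 0) (hC.1 1 1) using 3 with x
    simp only [succ_nsmul, Matrix.cons_val]
    abel

theorem id_notMem_zmultiples_nsmul_id {q : ℕ} (hq : q ≠ 1) (h : q ∣ AddMonoid.exponent A) :
    (id : A → A) ∉ AddSubgroup.zmultiples (q • (id : A → A)) := by
  rintro ⟨n, hn⟩
  have hzero (a : A) : (n * q - 1 : ℤ) • a = 0 := by
    rw [sub_smul, mul_smul, one_smul, sub_eq_zero]
    simpa using congrFun hn a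
  have hdvd : (q : ℤ) ∣ n * q - 1 :=
    (Int.natCast_dvd_natCast.2 h).trans (AddGroup.exponent_dvd_iff_forall_zsmul_eq_zero.2 hzero)
  have : (q : ℤ) ∣ 1 := (dvd_sub_right (dvd_mul_left _ _)).1 hdvd
  exact hq (Nat.dvd_one.1 (by exact_mod_cast this))

theorem exists_prime_nsmul_eq_zero
    (hC : IsMinimalClone (cloneGen {(⟨2, fun x : Fin 3 → A => x 0 - x 1 + x 2⟩ : Ops A)})) :
    ∃ q : ℕ, q.Prime ∧ ∀ a : A, q • a = 0 := by
  have := hC.nontrivial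
  obtain ⟨q, hq, hqe⟩ := Nat.exists_prime_and_dvd
    (mt AddMonoid.exp_eq_one_iff.1 (not_subsingleton A))
  refine ⟨q, hq, fun a => ?_⟩
  let S := AddSubgroup.zmultiples (id : A → A)
  let H := AddSubgroup.zmultiples (q • (id : A → A))
  have hid : id ∈ S := AddSubgroup.mem_zmultiples _
  have hnsmul {w : A → A} : w ∈ S → q • w ∈ H := fun ⟨n, hn⟩ => ⟨n, hn ▸ smul_comm n q id⟩
  have hpC := subset_cloneGen {(⟨2, fun x : Fin 3 → A => x 0 - x 1 + x 2⟩ : Ops A)} rfl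
  have hline : (fun x : Fin 2 → A => x 0 + q • (x 1 - x 0)) = fun x => x 0 := by
    refine hC.eq_of_isSubpowerCongruence isMaltsev_sub_add hpC (isSubpowerCongruence_sub_mem S H)
      (u := id) (v := 0) ⟨hid, hid, ?_⟩ ⟨S.zero_mem, S.zero_mem, ?_⟩ ?_
      (hC.1.add_nsmul_sub_mem hpC q) (hC.1.1 1 0) fun w hw => ⟨?_, (hw 0).1, ?_⟩
    · simp
    · simp
    · exact fun h =>
        id_notMem_zmultiples_nsmul_id hq.ne_one hqe (by simpa only [sub_zero] using h.2.2)
    · exact S.add_mem (hw 0).1 (S.nsmul_mem (S.sub_mem (hw 1).1 (hw 0).1) q)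
    · have hwH : q • (w 1 - w 0) ∈ H := hnsmul (S.sub_mem (hw 1).1 (hw 0).1)
      exact (add_sub_cancel_left (w 0) _).symm ▸ hwH
  simpa using congrFun hline ![0, a]

end PrimeExponent

/-- **Kearnes' Theorem on minimal clones with a Mal'tsev operation.**  If a minimal
clone `C` on a set `A` contains a Mal'tsev operation, then there are a prime `q` and an
elementary abelian `q`-group structure `(A; +)` such that `C` is the clone generated by
the ternary operation `x₁ - x₂ + x₃` (the clone of an affine space over `Z_q`). -/
theorem kearnes_maltsev_minimal {A : Type u} (C : Set (Ops A)) (hC : IsMinimalClone C)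
    (hm : ∃ p : (Fin 3 → A) → A, IsMaltsev p ∧ (⟨2, p⟩ : Ops A) ∈ C) :
    ∃ q : ℕ, q.Prime ∧ ∃ _ : AddCommGroup A, (∀ a : A, q • a = 0) ∧
      C = cloneGen {(⟨2, fun x : Fin 3 → A => x 0 - x 1 + x 2⟩ : Ops A)} := by
  obtain ⟨p, hp, hpC⟩ := hm
  have := hC.nontrivial
  obtain ⟨_, rfl⟩ := hp.exists_addCommGroup (hC.opsCommute hp hpC hpC)
  have hCp := hC.eq_cloneGen_singleton hpC hp.notMem_projClone
  obtain ⟨q, hq, hqA⟩ := exists_prime_nsmul_eq_zero (hCp ▸ hC)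
  exact ⟨q, hq, _, hqA, hCp⟩
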